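/- Let σ* be the strategy profile in the Prisoner's Dilemma Markov Commitment Game in which each player i uses σ*_i = (C, ψ*_i, D), where ψ*_i commits (outputs 1) if and only if the opponent's proposal is C (the value of ψ*_i on the joint proposal (D,D) may be fixed to either 0 or 1). Then σ* is a pure-strategy Nash equilibrium: for each player i and every alternative pure strategy τ_i = (m, ψ, a), the payoff of player i under (τ_i, σ*_{-i}) is at most the payoff of player i under σ*, which equals −1. -/

import Mathlib

/-- Action in the Prisoner's Dilemma: cooperate or defect. -/
inductive Act : Type
  | C : Act
  | D : Act
deriving DecidableEq

open Act

/-- Payoff function of the Prisoner's Dilemma. -/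
noncomputable def u : Act → Act → ℝ × ℝ
  | C, C => (-1, -1)
  | C, D => (-3, 0)
  | D, C => (0, -3)
  | D, D => (-2, -2)

/-- A pure strategy in the PD Markov Commitment Game: a proposal, a commitment
rule on the joint proposal (`true` = commit), and an independent action. -/
structure Strat : Type where
  m : Act
  ψ : Act → Act → Bool
  a : Act

/-- The executed joint action: the joint proposal if both players commit,
otherwise the independent actions. -/
def exec (s1 s2 : Strat) : Act × Act :=
  if s1.ψ s1.m s2.m = true ∧ s2.ψ s1.m s2.m = true then (s1.m, s2.m) else (s1.a, s2.a)

/-- Player 1's payoff. -/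
noncomputable def pay1 (s1 s2 : Strat) : ℝ := (u (exec s1 s2).1 (exec s1 s2).2).1

/-- Player 2's payoff. -/
noncomputable def pay2 (s1 s2 : Strat) : ℝ := (u (exec s1 s2).1 (exec s1 s2).2).2

/-- Player 1's equilibrium commitment rule: commit iff the opponent's proposal is C. -/
def ψstar1 : Act → Act → Bool := fun _ m2 => match m2 with | C => true | D => false

/-- Player 2's equilibrium commitment rule: commit iff the opponent's proposal is C. -/
def ψstar2 : Act → Act → Bool := fun m1 _ => match m1 with | C => true | D => false

/-- The profile in which each player proposes C, commits iff the opponent's proposal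
is C (with the value on the joint proposal (D,D) arbitrary), and independently plays D,
is a pure-strategy Nash equilibrium of the PD Markov Commitment Game with payoff -1
for each player. -/
theorem mutual_cooperation_nash_equilibrium
    (ψ1 ψ2 : Act → Act → Bool)
    (h1cc : ψ1 C C = true) (h1dc : ψ1 D C = true) (h1cd : ψ1 C D = false)
    (h2cc : ψ2 C C = true) (h2cd : ψ2 C D = true) (h2dc : ψ2 D C = false) :
    pay1 ⟨C, ψ1, D⟩ ⟨C, ψ2, D⟩ = -1 ∧
    pay2 ⟨C, ψ1, D⟩ ⟨C, ψ2, D⟩ = -1 ∧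
    (∀ τ : Strat, pay1 τ ⟨C, ψ2, D⟩ ≤ pay1 ⟨C, ψ1, D⟩ ⟨C, ψ2, D⟩) ∧
    (∀ τ : Strat, pay2 ⟨C, ψ1, D⟩ τ ≤ pay2 ⟨C, ψ1, D⟩ ⟨C, ψ2, D⟩) := by
  have e1 : pay1 ⟨C, ψ1, D⟩ ⟨C, ψ2, D⟩ = -1 := by simp [pay1, exec, h1cc, h2cc, u]
  have e2 : pay2 ⟨C, ψ1, D⟩ ⟨C, ψ2, D⟩ = -1 := by simp [pay2, exec, h1cc, h2cc, u]
  refine ⟨e1, e2, ?_, ?_⟩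
  · rintro ⟨m, ψ, a⟩
    rw [e1]
    cases m <;> cases a <;> cases h : ψ C C <;>
      norm_num [pay1, exec, h2cc, h2dc, u, h]
  · rintro ⟨m, ψ, a⟩
    rw [e2]
    cases m <;> cases a <;> cases h : ψ C C <;>
      norm_num [pay2, exec, h1cc, h1cd, u, h]
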